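/- arXiv:2211.03830 — 7 statements merged into one kernel-verified Lean document; each statement's English description precedes it below -/
import Mathlib

section
/- Let b be a real number. Then the inequality y/2 + ((μ − y)/y)·((2xy − bμ(x+y))/(x + y − μ)) ≤ bμ holds for every μ > 0 and every pair (x,y) with 0 < x ≤ μ, 0 < y ≤ μ and x + y > μ, if and only if b ≥ 16/27. -/
theorem phi1_le_iff (b : ℝ) :
    (∀ μ : ℝ, 0 < μ → ∀ x y : ℝ, 0 < x → x ≤ μ → 0 < y → y ≤ μ → μ < x + y →
      y / 2 + ((μ - y) / y) * ((2 * x * y - b * μ * (x + y)) / (x + y - μ)) ≤ b * μ) ↔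
    b ≥ 16 / 27 := by
  constructor
  · intro h
    have h1 := h 1 (by norm_num) 1 (2/3) (by norm_num) (by norm_num) (by norm_num) (by norm_num)
      (by norm_num)
    norm_num at h1
    linarith
  · intro hb μ hμ x y hx hxm hy hym hxy
    have hd : 0 < x + y - μ := by linarith
    have h1 : 0 ≤ (y - 2/3*μ)^2 * (4/3*μ - y/2) :=
      mul_nonneg (sq_nonneg _) (by linarith)
    have h2 : y^3/2 + 2*μ*y*(μ-y) ≤ 16/27*μ^3 := by nlinarith [h1]
    have h3 : 16/27*μ^3 ≤ b*μ^3 := mul_le_mul_of_nonneg_right hb (by positivity)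
    have h4 : x*(y^3/2 + 2*μ*y*(μ-y)) ≤ x*(b*μ^3) :=
      mul_le_mul_of_nonneg_left (h2.trans h3) hx.le
    have h5 : 0 ≤ y^2 * ((μ-x)*(μ-y)) :=
      mul_nonneg (sq_nonneg _) (mul_nonneg (by linarith) (by linarith))
    have h6 : μ * (y^2*(x+y-μ)/2 + 2*x*y*(μ-y)) ≤ μ * (b*μ^2*x) := by nlinarith [h4, h5]
    have h7 := le_of_mul_le_mul_left h6 hμ
    have e : b*μ - (y / 2 + ((μ - y) / y) * ((2 * x * y - b * μ * (x + y)) / (x + y - μ)))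
        = (b*μ^2*x - (y^2*(x+y-μ)/2 + 2*x*y*(μ-y))) / (y*(x+y-μ)) := by
      have := hd.ne'
      field_simp
      ring
    have h8 : 0 ≤ (b*μ^2*x - (y^2*(x+y-μ)/2 + 2*x*y*(μ-y))) / (y*(x+y-μ)) :=
      div_nonneg (by linarith) (by positivity)
    linarith
end

section
/- Let b be a real number. Then the inequality (3/8)x + ((μ − y)/y)·((2xy − bμ(x+y))/(x + y − μ)) ≤ bμ holds for every μ > 0 and every pair (x,y) with 0 < x ≤ μ, 0 < y ≤ μ and x + y > μ, if and only if b ≥ 8/13. -/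
theorem phi2_le_iff (b : ℝ) :
    (∀ μ : ℝ, 0 < μ → ∀ x y : ℝ, 0 < x → x ≤ μ → 0 < y → y ≤ μ → μ < x + y →
      (3 / 8) * x + ((μ - y) / y) * ((2 * x * y - b * μ * (x + y)) / (x + y - μ)) ≤ b * μ) ↔
    b ≥ 8 / 13 := by
  constructor
  · intro h
    have := h 1 (by norm_num) 1 (8/13) (by norm_num) (by norm_num) (by norm_num) (by norm_num)
      (by norm_num)
    norm_num at this
    linarith
  · intro hb μ hμ x y hx hxm hy hym hxy
    have hd : 0 < x + y - μ := by linarith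
    have key : b * μ - ((3 / 8) * x + ((μ - y) / y) * ((2 * x * y - b * μ * (x + y)) / (x + y - μ)))
        = x * (b * μ ^ 2 - y * ((3 / 8) * (x + y - μ) + 2 * (μ - y))) / (y * (x + y - μ)) := by
      have := hd.ne'
      field_simp
      ring
    have h1 : 0 ≤ b * μ ^ 2 - y * ((3 / 8) * (x + y - μ) + 2 * (μ - y)) := by
      nlinarith [mul_nonneg (sub_nonneg.2 hb) (sq_nonneg μ), mul_nonneg hy.le (sub_nonneg.2 hxm),
        sq_nonneg (13 * y - 8 * μ)]
    have h2 : 0 ≤ x * (b * μ ^ 2 - y * ((3 / 8) * (x + y - μ) + 2 * (μ - y))) / (y * (x + y - μ)) :=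
      div_nonneg (mul_nonneg hx.le h1) (mul_pos hy hd).le
    linarith
end

section
/- Let b be a real number. Then the inequality (3/2)x₂ − x₂(4x₂ − x)/(2y) + ((μ − y)/y)·((2xy − bμ(x+y))/(x + y − μ)) ≤ bμ holds for every μ > 0, every pair (x,y) with 0 < x ≤ μ, 0 < y ≤ μ, x + y > μ, and every x₂ with 0 < x₂ ≤ μ, if and only if b ≥ (1609·√1609 − 42427)/34992. -/
lemma phi3_cubic (s μ y : ℝ) (hs : s ^ 2 = 1609) (hs0 : 0 < s) (hμ : 0 < μ) (hy : y ≤ μ) :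
    9*y^3 - 58*y^2*μ + 65*y*μ^2 ≤ 32 * ((1609 * s - 42427) / 34992) * μ^3 := by
  have hs40 : 40 ≤ s := by nlinarith
  have h : 32 * ((1609 * s - 42427) / 34992) * μ^3 - (9*y^3 - 58*y^2*μ + 65*y*μ^2)
      = 9 * (y - (58 - s)/27*μ)^2 * ((58/9 - 2*((58 - s)/27))*μ - y) := by
    have h3 : s^3 = 1609 * s := by rw [pow_succ, hs]
    ring_nf
    rw [h3, hs]
    ring
  have h2 : 0 ≤ (58/9 - 2*((58 - s)/27))*μ - y := by nlinarith
  have := mul_nonneg (mul_nonneg (by norm_num : (0:ℝ) ≤ 9) (sq_nonneg (y - (58 - s)/27*μ))) h2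
  linarith

lemma phi3_key (b μ x y z : ℝ) (hy : 0 < y) (hd : 0 < x + y - μ) :
    (3 / 2) * z - z * (4 * z - x) / (2 * y) +
        ((μ - y) / y) * ((2 * x * y - b * μ * (x + y)) / (x + y - μ)) - b * μ =
    (z*(x+3*y-4*z)*(x+y-μ) + 4*(μ-y)*x*y - 2*b*μ^2*x) / (2*y*(x+y-μ)) := by
  have := hy.ne'
  have := hd.ne'
  field_simp
  ring

theorem phi3_le_iff (b : ℝ) :
    (∀ μ : ℝ, 0 < μ → ∀ x y : ℝ, 0 < x → x ≤ μ → 0 < y → y ≤ μ → μ < x + y →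
      ∀ x₂ : ℝ, 0 < x₂ → x₂ ≤ μ →
      (3 / 2) * x₂ - x₂ * (4 * x₂ - x) / (2 * y) +
        ((μ - y) / y) * ((2 * x * y - b * μ * (x + y)) / (x + y - μ)) ≤ b * μ) ↔
    b ≥ (1609 * Real.sqrt 1609 - 42427) / 34992 := by
  have hs : (Real.sqrt 1609) ^ 2 = 1609 := Real.sq_sqrt (by norm_num)
  have hs0 : 0 < Real.sqrt 1609 := Real.sqrt_pos.mpr (by norm_num)
  generalize Real.sqrt 1609 = s at hs hs0
  have hs40 : 40 ≤ s := by nlinarith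
  have hs41 : s ≤ 41 := by nlinarith
  constructor
  · intro H
    have h := H 1 one_pos 1 ((58 - s)/27) one_pos le_rfl (by linarith) (by linarith)
      (by linarith) ((1 + 3*((58 - s)/27))/8) (by linarith) (by linarith)
    have k := phi3_key b 1 1 ((58 - s)/27) ((1 + 3*((58 - s)/27))/8) (by linarith) (by linarith)
    have hp : 0 < 2 * ((58 - s)/27) * (1 + (58 - s)/27 - 1) :=
      mul_pos (by linarith) (by linarith)
    have h' := sub_nonpos.mpr h
    rw [k, div_nonpos_iff] at h'
    have h3 : s^3 = 1609 * s := by rw [pow_succ, hs]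
    rcases h' with h' | h'
    · linarith [h'.2]
    · have := h'.1
      ring_nf at this
      rw [h3] at this
      linarith
  · intro hb μ hμ x y hx hxμ hy hyμ hxy z hz hzμ
    have hd : 0 < x + y - μ := by linarith
    rw [← sub_nonpos, phi3_key b μ x y z hy hd]
    apply div_nonpos_of_nonpos_of_nonneg _ (by positivity)
    have c := phi3_cubic s μ y hs hs0 hμ hyμ
    have c2 : 32 * ((1609 * s - 42427) / 34992) * μ^3 ≤ 32 * b * μ^3 := by
      have : 0 < μ^3 := by positivity
      nlinarith
    have h1 : z*(x+3*y-4*z)*(x+y-μ) ≤ (x+3*y)^2/16*(x+y-μ) :=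
      mul_le_mul_of_nonneg_right (by nlinarith [sq_nonneg (x+3*y-8*z)]) hd.le
    have h2 : 0 ≤ (μ-x)*(x*μ*(x+7*y) + 9*y^2*(μ-y)) :=
      mul_nonneg (by linarith) (add_nonneg (by positivity)
        (mul_nonneg (by positivity) (by linarith)))
    have h3 : μ*((x+3*y)^2*(x+y-μ) + 64*(μ-y)*x*y) ≤ x*(9*y^3 - 58*y^2*μ + 65*y*μ^2) := by
      nlinarith
    have h4 : x*(9*y^3 - 58*y^2*μ + 65*y*μ^2) ≤ x*(32*b*μ^3) :=
      mul_le_mul_of_nonneg_left (c.trans c2) hx.le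
    have h5 : (x+3*y)^2*(x+y-μ) + 64*(μ-y)*x*y ≤ 32*b*μ^2*x := by
      refine le_of_mul_le_mul_left ?_ hμ
      linarith
    linarith
end

section
/- Let b ≥ 1/2 and μ > 0. For every fixed y with 0 < y ≤ μ, the function x ↦ ((μ − y)/y)·((2xy − bμ(x+y))/(x + y − μ)) is monotonically nondecreasing on the set of x with 0 < x ≤ μ and x + y > μ; that is, if (x,y) and (x',y) both lie in X^μ and x ≤ x', then φ₀(x,y) ≤ φ₀(x',y). -/
theorem phi0_monotone (b μ : ℝ) (hb : b ≥ 1 / 2) (hμ : 0 < μ)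
    (x x' y : ℝ) (hy : 0 < y) (hyμ : y ≤ μ)
    (hx : 0 < x) (hxμ : x ≤ μ) (hxy : μ < x + y)
    (hx' : 0 < x') (hx'μ : x' ≤ μ) (hx'y : μ < x' + y)
    (hxx' : x ≤ x') :
    ((μ - y) / y) * ((2 * x * y - b * μ * (x + y)) / (x + y - μ)) ≤
      ((μ - y) / y) * ((2 * x' * y - b * μ * (x' + y)) / (x' + y - μ)) := by
  apply mul_le_mul_of_nonneg_left _ (div_nonneg (by linarith) hy.le)
  rw [div_le_div_iff₀ (by linarith) (by linarith)]
  have h1 : 0 ≤ 2 * y ^ 2 - 2 * y * μ + b * μ ^ 2 := by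
    nlinarith [sq_nonneg (2 * y - μ), mul_nonneg (sub_nonneg.2 hb) (sq_nonneg μ)]
  have h2 := mul_nonneg (sub_nonneg.2 hxx') h1
  linarith
end

section
/- Let μ > 0. For all real numbers x, y with 0 < x ≤ μ, 0 < y ≤ μ and x + y > μ, it holds that x/2 + (2/3)·((μ − y)/y)·((3xy − μ(x+y))/(x + y − μ)) ≤ (2/3)·μ. -/
theorem f_le_two_thirds_mu (μ : ℝ) (hμ : 0 < μ) (x y : ℝ)
    (hx : 0 < x) (hxμ : x ≤ μ) (hy : 0 < y) (hyμ : y ≤ μ) (hxy : μ < x + y) :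
    x / 2 + (2 / 3) * ((μ - y) / y) * ((3 * x * y - μ * (x + y)) / (x + y - μ)) ≤
      (2 / 3) * μ := by
  have hs : 0 < x + y - μ := by linarith
  have h1 : 0 ≤ μ - x := by linarith
  have h2 : 0 ≤ μ - y := by linarith
  have hq : 0 ≤ μ ^ 2 - 3 * y * μ + 3 * y ^ 2 := by
    nlinarith [sq_nonneg (2 * μ - 3 * y), sq_nonneg y]
  have key : 0 ≤ y * ((4 * μ - 3 * x) * y * (x + y - μ)
      - 4 * (μ - y) * (3 * x * y - μ * (x + y))) := by
    have e : y * ((4 * μ - 3 * x) * y * (x + y - μ)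
      - 4 * (μ - y) * (3 * x * y - μ * (x + y))) =
      (x + y - μ) * μ * (3 * y - 2 * μ) ^ 2
      + (μ - x) * (4 * (μ - y)) * (μ ^ 2 - 3 * y * μ + 3 * y ^ 2)
      + 3 * y ^ 2 * ((μ - x) * (x + y - μ)) := by ring
    rw [e]
    positivity
  have hP := nonneg_of_mul_nonneg_right key hy
  have e2 : (2 / 3) * μ - (x / 2 + (2 / 3) * ((μ - y) / y) *
      ((3 * x * y - μ * (x + y)) / (x + y - μ))) =
      ((4 * μ - 3 * x) * y * (x + y - μ)
      - 4 * (μ - y) * (3 * x * y - μ * (x + y))) / (6 * (y * (x + y - μ))) := by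
    have := hs.ne'
    field_simp
    ring
  have : 0 ≤ (2 / 3) * μ - (x / 2 + (2 / 3) * ((μ - y) / y) *
      ((3 * x * y - μ * (x + y)) / (x + y - μ))) := by
    rw [e2]
    exact div_nonneg hP (by positivity)
  linarith
end

section
/- Let b > 0, β ≥ 1, and set a := (2bβ)/(√(4bβ + (β − 1)²) + β − 1). Then for all x, y > 0, the identity (βx + y + 2√(bβxy))/(x + y) = β + a − (a/(x + y))·(√x − (√(bβ)/a)·√y)² holds. -/
theorem ratio_identity (b β : ℝ) (hb : 0 < b) (hβ : 1 ≤ β) (x y : ℝ)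
    (hx : 0 < x) (hy : 0 < y) :
    (β * x + y + 2 * Real.sqrt (b * β * x * y)) / (x + y) =
      β + (2 * b * β) / (Real.sqrt (4 * b * β + (β - 1) ^ 2) + β - 1) -
        ((2 * b * β) / (Real.sqrt (4 * b * β + (β - 1) ^ 2) + β - 1) / (x + y)) *
          (Real.sqrt x -
            (Real.sqrt (b * β) /
              ((2 * b * β) / (Real.sqrt (4 * b * β + (β - 1) ^ 2) + β - 1))) *
              Real.sqrt y) ^ 2 := by
  have hbβ : 0 < b * β := by positivity
  have hS := Real.sq_sqrt (show 0 ≤ 4 * b * β + (β - 1) ^ 2 by nlinarith [sq_nonneg (β - 1)])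
  have hSp : 0 < Real.sqrt (4 * b * β + (β - 1) ^ 2) :=
    Real.sqrt_pos.mpr (by nlinarith [sq_nonneg (β - 1)])
  have hr : Real.sqrt (b * β * x * y) = Real.sqrt (b * β) * Real.sqrt x * Real.sqrt y := by
    rw [Real.sqrt_mul (by positivity), Real.sqrt_mul (by positivity)]
  rw [hr]
  have h1 := Real.sq_sqrt hbβ.le
  have h2 := Real.sq_sqrt hx.le
  have h3 := Real.sq_sqrt hy.le
  generalize Real.sqrt (4 * b * β + (β - 1) ^ 2) = S at *
  generalize Real.sqrt (b * β) = c at *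
  generalize Real.sqrt x = u at *
  generalize Real.sqrt y = v at *
  have hD : 0 < S + β - 1 := by linarith
  have ha : 0 < 2 * b * β / (S + β - 1) := div_pos (by linarith) hD
  have hq : (2 * b * β / (S + β - 1)) ^ 2 + (β - 1) * (2 * b * β / (S + β - 1)) = b * β := by
    field_simp
    linear_combination (-1) * hS
  generalize 2 * b * β / (S + β - 1) = a at *
  have hxy : x + y ≠ 0 := by positivity
  have ha' := ha.ne'
  have key : a * (u - c / a * v) ^ 2 = a * x - 2 * c * u * v + (a + β - 1) * y := by
    have e : c ^ 2 / a = a + β - 1 := by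
      rw [h1, div_eq_iff ha']; linear_combination -hq
    have : a * (u - c / a * v) ^ 2 = a * u ^ 2 - 2 * c * u * v + c ^ 2 / a * v ^ 2 := by
      field_simp
      ring
    rw [this, e, h2, h3]
  rw [div_mul_eq_mul_div, key]
  field_simp
  ring
end

section
/- Let b > 0 and β ≥ 1. Then for all x, y > 0, (βx + y + 2√(bβxy))/(x + y) ≤ β + (2bβ)/(√(4bβ + (β − 1)²) + β − 1). -/
theorem ratio_le (b β : ℝ) (hb : 0 < b) (hβ : 1 ≤ β) (x y : ℝ)
    (hx : 0 < x) (hy : 0 < y) :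
    (β * x + y + 2 * Real.sqrt (b * β * x * y)) / (x + y) ≤
      β + (2 * b * β) / (Real.sqrt (4 * b * β + (β - 1) ^ 2) + β - 1) := by
  have hbβ : 0 < b * β := by positivity
  have hpos : 0 < 4 * b * β + (β - 1) ^ 2 := by nlinarith [sq_nonneg (β - 1)]
  have hS := Real.sqrt_pos.mpr hpos
  have hS2 := Real.sq_sqrt hpos.le
  set S := Real.sqrt (4 * b * β + (β - 1) ^ 2) with hSdef
  have hden : 0 < S + β - 1 := by linarith
  obtain ⟨t, ht⟩ : ∃ t, t = (2 * b * β) / (S + β - 1) := ⟨_, rfl⟩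
  have ht0 : 0 < t := by rw [ht]; apply div_pos _ hden; linarith
  have hte : t = (S - (β - 1)) / 2 := by
    rw [ht, div_eq_iff hden.ne']; linarith
  have hprod : b * β = t * (t + β - 1) := by rw [hte]; linarith
  rw [← ht]
  have hu : 0 ≤ t + β - 1 := by linarith
  have hsq : Real.sqrt (b * β * x * y) ≤ (t * x + (t + β - 1) * y) / 2 := by
    rw [Real.sqrt_le_iff]
    refine ⟨by positivity, ?_⟩
    rw [hprod]
    nlinarith [sq_nonneg (t * x - (t + β - 1) * y)]
  rw [div_le_iff₀ (by positivity)]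
  linarith
end
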